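/- Fix a real number c with 0 ≤ c < 1 and set ξ∧ = 4√(1−c²)/(3(1+c)). Then ψ₃(0,ξ∧) = 0 and ψ₃(t,ξ∧) ≥ 0 for all t ∈ [−1,1]; moreover, for every ξ > 0 such that ψ₃(t,ξ) ≥ 0 for all t ∈ [−1,1], sup over t ∈ [−1,1] of |ψ₃(t,ξ)| is at least sup over t ∈ [−1,1] of |ψ₃(t,ξ∧)|; i.e., ξ∧ induces the optimal outer cubic G¹ approximant. -/

import Mathlib

/-- Simplified radial error of the cubic G¹ Bézier approximant of the unit circular arc. -/
noncomputable def psi3 (c t ξ : ℝ) : ℝ :=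
  (1/16) * (1 - t^2)^2 *
    (9*ξ^2*(c^2*t^2 + 1 - c^2) + 12*ξ*(2 - t^2)*c*Real.sqrt (1 - c^2)
      - 4*(4 - t^2)*(1 - c^2))

/-- Sup over `t ∈ [−1,1]` of `|f t|`. -/
noncomputable def errSup (f : ℝ → ℝ) : ℝ :=
  sSup ((fun t => |f t|) '' Set.Icc (-1 : ℝ) 1)

/-!
With `s = √(1 - c²)`, completing squares gives
`16 ψ₃(t, ξ) = (1 - t²)² (t² (3cξ - 2s)² + (3sξ + 4c)² - 16)`.
Hence for `ξ > 0` the error is nonnegative everywhere as soon as it is nonnegative at `t = 0`,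
that is, as soon as `3sξ + 4c ≥ 4`, and `ξ∧` is the value giving equality. For fixed `t` the error
increases in `ξ` from `ξ∧` on, so every other outer approximant has a pointwise larger error.
-/

open Set

/-- The parameter `ξ∧` of the optimal outer approximant: the distance from each endpoint of the
arc to the adjacent inner control point. -/
noncomputable def outerHandleLength (c : ℝ) : ℝ :=
  4 * √(1 - c ^ 2) / (3 * (1 + c))

theorem errSup_le_errSup {f g : ℝ → ℝ} (hg : ContinuousOn g (Icc (-1) 1))
    (hfg : ∀ t ∈ Icc (-1 : ℝ) 1, |f t| ≤ |g t|) : errSup f ≤ errSup g := by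
  have hbdd : BddAbove ((fun t => |g t|) '' Icc (-1 : ℝ) 1) :=
    isCompact_Icc.bddAbove_image hg.abs
  refine csSup_le ((nonempty_Icc.2 (by norm_num)).image _) ?_
  rintro _ ⟨t, ht, rfl⟩
  exact (hfg t ht).trans (le_csSup hbdd (mem_image_of_mem _ ht))

theorem continuous_psi3 (c ξ : ℝ) : Continuous fun t => psi3 c t ξ := by
  unfold psi3
  fun_prop

section

variable {c t ξ : ℝ}

theorem sq_sqrt_one_sub_sq (hc : -1 ≤ c) (hc' : c ≤ 1) : √(1 - c ^ 2) ^ 2 = 1 - c ^ 2 :=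
  Real.sq_sqrt (by nlinarith)

theorem psi3_eq_add_sq_sub (hc : -1 ≤ c) (hc' : c ≤ 1) (t ξ : ℝ) :
    psi3 c t ξ = (1 - t ^ 2) ^ 2 / 16 *
      (t ^ 2 * (3 * c * ξ - 2 * √(1 - c ^ 2)) ^ 2 + ((3 * √(1 - c ^ 2) * ξ + 4 * c) ^ 2 - 16)) := by
  unfold psi3
  linear_combination
    (-(1 - t ^ 2) ^ 2 / 16 * (4 * t ^ 2 + 9 * ξ ^ 2)) * sq_sqrt_one_sub_sq hc hc'

theorem three_mul_sqrt_mul_outerHandleLength (hc : -1 < c) (hc' : c ≤ 1) :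
    3 * √(1 - c ^ 2) * outerHandleLength c = 4 * (1 - c) := by
  have hpos : 0 < 1 + c := by linarith
  unfold outerHandleLength
  field_simp
  linear_combination sq_sqrt_one_sub_sq hc.le hc'

theorem psi3_outerHandleLength (hc : -1 < c) (hc' : c ≤ 1) (t : ℝ) :
    psi3 c t (outerHandleLength c) =
      (1 - t ^ 2) ^ 2 / 16 * (t ^ 2 * (3 * c * outerHandleLength c - 2 * √(1 - c ^ 2)) ^ 2) := by
  rw [psi3_eq_add_sq_sub hc.le hc', three_mul_sqrt_mul_outerHandleLength hc hc']
  ring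

theorem psi3_outerHandleLength_nonneg (hc : -1 < c) (hc' : c ≤ 1) (t : ℝ) :
    0 ≤ psi3 c t (outerHandleLength c) := by
  rw [psi3_outerHandleLength hc hc']
  positivity

theorem outerHandleLength_le_of_psi3_zero_nonneg (hc : -1 < c) (hc' : c < 1) (hξ : 0 ≤ ξ)
    (h : 0 ≤ psi3 c 0 ξ) : outerHandleLength c ≤ ξ := by
  have hs : 0 < √(1 - c ^ 2) := Real.sqrt_pos.2 (by nlinarith)
  have hsq : (4 : ℝ) ^ 2 ≤ (3 * √(1 - c ^ 2) * ξ + 4 * c) ^ 2 := by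
    rw [psi3_eq_add_sq_sub hc.le hc'.le] at h
    linarith
  have hgt : -4 < 3 * √(1 - c ^ 2) * ξ + 4 * c := by
    have : 0 ≤ 3 * √(1 - c ^ 2) * ξ := by positivity
    linarith
  have hge : 4 ≤ 3 * √(1 - c ^ 2) * ξ + 4 * c := by nlinarith
  refine le_of_mul_le_mul_left ?_ (show 0 < 3 * √(1 - c ^ 2) by positivity)
  rw [three_mul_sqrt_mul_outerHandleLength hc hc'.le]
  linarith

-- Up to the factor `(1 - t²)² / 16`, this expression is `∂ψ₃/∂ξ` at `ξ∧`.
theorem psi3_slope_outerHandleLength_nonneg (hc : -1 < c) (ht : t ^ 2 ≤ 1) :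
    0 ≤ 18 * outerHandleLength c * (c ^ 2 * t ^ 2 + 1 - c ^ 2)
      + 12 * (2 - t ^ 2) * c * √(1 - c ^ 2) := by
  have hpos : 0 < 1 + c := by linarith
  have hfactor : 0 ≤ 2 * (1 + c) - c * (1 - c) * t ^ 2 := by
    calc (0 : ℝ)
        ≤ 2 * (1 + c) * (1 - t ^ 2) + (1 + (1 + c) + c ^ 2) * t ^ 2 :=
          add_nonneg (mul_nonneg (by positivity) (sub_nonneg.2 ht)) (by positivity)
      _ = 2 * (1 + c) - c * (1 - c) * t ^ 2 := by ring
  calc (0 : ℝ)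
      ≤ 12 * √(1 - c ^ 2) / (1 + c) * (2 * (1 + c) - c * (1 - c) * t ^ 2) := by positivity
    _ = 18 * outerHandleLength c * (c ^ 2 * t ^ 2 + 1 - c ^ 2)
        + 12 * (2 - t ^ 2) * c * √(1 - c ^ 2) := by
      unfold outerHandleLength
      field_simp
      ring

theorem monotoneOn_psi3 (hc : -1 < c) (hc' : c ≤ 1) (ht : t ^ 2 ≤ 1) :
    MonotoneOn (psi3 c t) (Ici (outerHandleLength c)) := by
  intro ξ (hξ : outerHandleLength c ≤ ξ) η (hη : outerHandleLength c ≤ η) hξη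
  have hlead : 0 ≤ c ^ 2 * t ^ 2 + 1 - c ^ 2 := by
    have hc2 : 0 ≤ 1 - c ^ 2 := by nlinarith
    linarith [mul_nonneg (sq_nonneg c) (sq_nonneg t)]
  have hslope : 0 ≤ 9 * (ξ + η) * (c ^ 2 * t ^ 2 + 1 - c ^ 2)
      + 12 * (2 - t ^ 2) * c * √(1 - c ^ 2) := by
    linarith [psi3_slope_outerHandleLength_nonneg hc ht,
      mul_le_mul_of_nonneg_right (add_le_add hξ hη) hlead]
  have hdiff : psi3 c t η - psi3 c t ξ = (1 - t ^ 2) ^ 2 / 16 * ((η - ξ) *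
      (9 * (ξ + η) * (c ^ 2 * t ^ 2 + 1 - c ^ 2) + 12 * (2 - t ^ 2) * c * √(1 - c ^ 2))) := by
    unfold psi3
    ring
  rw [← sub_nonneg, hdiff]
  exact mul_nonneg (by positivity) (mul_nonneg (sub_nonneg.2 hξη) hslope)

end

theorem stmt_4_general (c : ℝ) (hc : -1 < c) (hc' : c < 1) :
    psi3 c 0 (outerHandleLength c) = 0 ∧
    (∀ t ∈ Icc (-1 : ℝ) 1, 0 ≤ psi3 c t (outerHandleLength c)) ∧
    ∀ ξ > (0 : ℝ), (∀ t ∈ Icc (-1 : ℝ) 1, 0 ≤ psi3 c t ξ) →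
      errSup (fun t => psi3 c t (outerHandleLength c)) ≤ errSup (fun t => psi3 c t ξ) := by
  have hnonneg := psi3_outerHandleLength_nonneg hc hc'.le
  refine ⟨by simp [psi3_outerHandleLength hc hc'.le], fun t _ => hnonneg t, fun ξ hξ houter => ?_⟩
  have hle : outerHandleLength c ≤ ξ :=
    outerHandleLength_le_of_psi3_zero_nonneg hc hc' hξ.le (houter 0 (by simp))
  refine errSup_le_errSup (continuous_psi3 c ξ).continuousOn fun t ht => ?_
  have ht2 : t ^ 2 ≤ 1 := (sq_le_one_iff_abs_le_one t).2 (abs_le.2 ht)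
  exact abs_le_abs_of_nonneg (hnonneg t) (monotoneOn_psi3 hc hc'.le ht2 self_mem_Ici hle hle)

/-- `ξ∧ = 4√(1−c²)/(3(1+c))` induces the optimal outer cubic G¹ approximant. -/
theorem stmt_4 (c : ℝ) (hc0 : 0 ≤ c) (hc1 : c < 1) :
    psi3 c 0 (4*Real.sqrt (1 - c^2)/(3*(1 + c))) = 0 ∧
    (∀ t ∈ Set.Icc (-1 : ℝ) 1, 0 ≤ psi3 c t (4*Real.sqrt (1 - c^2)/(3*(1 + c)))) ∧
    ∀ ξ > (0 : ℝ), (∀ t ∈ Set.Icc (-1 : ℝ) 1, 0 ≤ psi3 c t ξ) →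
      errSup (fun t => psi3 c t (4*Real.sqrt (1 - c^2)/(3*(1 + c)))) ≤
        errSup (fun t => psi3 c t ξ) :=
  stmt_4_general c (by linarith) hc1
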